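/- Let E be a complex Banach space, A ∈ 𝒫(θ_A) and B ∈ 𝒫(θ_B) resolvent commuting with θ_A > θ_B and θ_A + θ_B > π, and let 𝒦 = (1/(2πi)) ∫_{Γ_{θ_B}} (A−z)⁻¹ (B+z)⁻¹ dz. Then for every w ∈ E one has the identity A⁻¹B⁻¹w = (A⁻¹ + B⁻¹)𝒦w. -/

import Mathlib

open Complex MeasureTheory Set Filter

noncomputable section

variable {E : Type*} [NormedAddCommGroup E] [NormedSpace ℂ E]

/-- `R ∈ ℒ(E)` is a (two-sided) bounded inverse of `A + lam`. -/
structure IsResolventAt (A : E →ₗ.[ℂ] E) (lam : ℂ) (R : E →L[ℂ] E) : Prop where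
  mem : ∀ y, R y ∈ A.domain
  right_inv : ∀ y, A ⟨R y, mem y⟩ + lam • R y = y
  left_inv : ∀ x : A.domain, R (A x + lam • (x : E)) = x

/-- The sector `S_θ = {z : |arg z| ≤ θ} ∪ {0}` (note `arg 0 = 0`). -/
def Sector (θ : ℝ) : Set ℂ := {z : ℂ | |z.arg| ≤ θ}

/-- `A ∈ 𝒫_K(θ)` with resolvent family `R`. -/
structure IsSectorial (A : E →ₗ.[ℂ] E) (θ : ℝ) (R : ℂ → E →L[ℂ] E) (K : ℝ) : Prop where
  one_le : 1 ≤ K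
  closed : A.IsClosed
  res : ∀ z ∈ Sector θ, IsResolventAt A z (R z)
  bound : ∀ z ∈ Sector θ, (1 + ‖z‖) * ‖R z‖ ≤ K

section Contours

variable {F : Type*} [NormedAddCommGroup F] [NormedSpace ℂ F]

/-- Integral over the ray `{ r e^{iθ} : r ≥ ρ }`, oriented outwards. -/
def rayIntegral (θ ρ : ℝ) (f : ℂ → F) : F :=
  ∫ r in Ioi ρ, Complex.exp (θ * I) • f (r * Complex.exp (θ * I))

/-- Integral over the positively oriented contour `Γ_θ = { r e^{± i θ} : r ≥ 0 }`
(coming in along the ray `e^{-iθ}` and leaving along `e^{iθ}`). -/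
def gammaIntegral (θ : ℝ) (f : ℂ → F) : F :=
  rayIntegral θ 0 f - rayIntegral (-θ) 0 f

/-- Integral over the arc `{ ρ e^{iφ} : θ₁ ≤ φ ≤ θ₂ }`, counterclockwise. -/
def arcIntegral (ρ θ₁ θ₂ : ℝ) (f : ℂ → F) : F :=
  ∫ φ in θ₁..θ₂, (I * ρ * Complex.exp (φ * I)) • f (ρ * Complex.exp (φ * I))

/-- Integral over the positively oriented contour
`Γ_{ρ,θ} = { ρ e^{iφ} : θ ≤ φ ≤ 2π-θ } ∪ { r e^{±iθ} : r ≥ ρ }`. -/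
def gammaRhoIntegral (ρ θ : ℝ) (f : ℂ → F) : F :=
  rayIntegral θ ρ f - rayIntegral (-θ) ρ f - arcIntegral ρ θ (2 * Real.pi - θ) f

/-- Integral over the reflected contour `-Γ_{ρ,θ}`. -/
def gammaRhoNegIntegral (ρ θ : ℝ) (f : ℂ → F) : F :=
  - gammaRhoIntegral ρ θ fun lam => f (-lam)

/-- Integral over the vertical line `iℝ - c`, oriented upwards. -/
def lineIntegral (c : ℝ) (f : ℂ → F) : F :=
  ∫ t : ℝ, I • f (t * I - c)

end Contours

/-- The operator `𝒦 = (1/(2πi)) ∫_{Γ_{θ_B}} (A-z)⁻¹ (B+z)⁻¹ dz` applied to `y`;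
here `RA (-z)` plays the role of `(A-z)⁻¹` and `RB z` of `(B+z)⁻¹`. -/
def Kop (RA RB : ℂ → E →L[ℂ] E) (θB : ℝ) (y : E) : E :=
  (2 * Real.pi * I : ℂ)⁻¹ • gammaIntegral θB fun z => RA (-z) (RB z y)

/-- The `K`-functional of the couple `(E, 𝒟(A))`, where `𝒟(A)` carries the graph norm. -/
def interpK (A : E →ₗ.[ℂ] E) (t : ℝ) (x : E) : ℝ :=
  ⨅ w : A.domain, (‖x - (w : E)‖ + t * (‖(w : E)‖ + ‖A w‖))

/-- Membership in the real interpolation space `(E, 𝒟(A))_{θ,q}`. -/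
def MemInterp (A : E →ₗ.[ℂ] E) (θ q : ℝ) (x : E) : Prop :=
  ∫⁻ t in Ioi (0 : ℝ), ENNReal.ofReal ((t ^ (-θ) * interpK A t x) ^ q / t) < ⊤

/-- Resolvent commutation for two sectorial operators. -/
def ResolventCommuting (RA RB : ℂ → E →L[ℂ] E) (θA θB : ℝ) : Prop :=
  ∃ lam ∈ Sector θA, ∃ mu ∈ Sector θB, Commute (RA lam) (RB mu)

/-!
The resolvent identities for `A` and `B` turn `(A⁻¹ + B⁻¹) (A - z)⁻¹ (B + z)⁻¹ w` into
`(A - z)⁻¹ v + (B + z)⁻¹ v` with `v = A⁻¹ B⁻¹ w`, a vector lying in both domains. The two summands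
are in general not separately integrable along `Γ_{θ_B}`, but their integrals can be cut off at
radius `ρ`. By Cauchy's theorem in a circular sector (to the right of the contour for `B`, to its
left for `A`) each becomes an integral over an arc, on which `z (B + z)⁻¹ v → v` and, likewise,
`-z (A - z)⁻¹ v → v`. As `ρ → ∞` the arcs contribute `2 i θ_B v` and `2 i (π - θ_B) v`, which add up
to `2πi v`.
-/

open scoped Topology Interval

section Resolvents

variable {A B : E →ₗ.[ℂ] E} {z w : ℂ} {R S : E →L[ℂ] E}

namespace IsResolventAt

lemma mul_one_sub (hR : IsResolventAt A z R) (hS : IsResolventAt A w S) :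
    S * (1 - (z - w) • R) = R := by
  ext y
  have hAR : A ⟨R y, hR.mem y⟩ = y - z • R y := eq_sub_of_add_eq (hR.right_inv y)
  have hSR : S (A ⟨R y, hR.mem y⟩ + w • R y) = R y := hS.left_inv ⟨R y, hR.mem y⟩
  calc S (y - (z - w) • R y) = S (A ⟨R y, hR.mem y⟩ + w • R y) := by
        rw [hAR]
        congr 1
        module
    _ = R y := hSR

lemma sub_eq_smul_mul (hR : IsResolventAt A z R) (hS : IsResolventAt A w S) :
    S - R = (z - w) • (S * R) := by
  rw [← mul_smul_comm, ← sub_eq_zero, sub_right_comm]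
  nth_rw 1 [← mul_one S]
  rw [← mul_sub, hR.mul_one_sub hS, sub_self]

lemma isUnit_one_sub (hR : IsResolventAt A z R) (hS : IsResolventAt A w S) :
    IsUnit (1 - (z - w) • R) := by
  have left_inv : (1 + (z - w) • S) * (1 - (z - w) • R) = 1 := by
    rw [add_mul, one_mul, smul_mul_assoc, hR.mul_one_sub hS, sub_add_cancel]
  have right_inv : (1 - (z - w) • R) * (1 + (z - w) • S) = 1 := by
    have h := hS.mul_one_sub hR
    rw [← neg_sub z w, neg_smul, sub_neg_eq_add] at h
    rw [sub_mul, one_mul, smul_mul_assoc, h, add_sub_cancel_right]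
  exact ⟨⟨_, _, right_inv, left_inv⟩, rfl⟩

lemma eq_mul_inverse (hR : IsResolventAt A z R) (hS : IsResolventAt A w S) :
    S = R * Ring.inverse (1 - (z - w) • R) :=
  (Ring.eq_mul_inverse_iff_mul_eq _ _ _ (hR.isUnit_one_sub hS)).2 (hR.mul_one_sub hS)

lemma commute_of_commute {T : E →L[ℂ] E} (hR : IsResolventAt A z R) (hS : IsResolventAt A w S)
    (hT : Commute T R) : Commute T S := by
  obtain ⟨u, hu⟩ := hR.isUnit_one_sub hS
  have hTu : Commute T u := hu ▸ (Commute.one_right T).sub_right (hT.smul_right _)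
  rw [hR.eq_mul_inverse hS, ← hu, Ring.inverse_unit]
  exact hT.mul_right hTu.units_inv_right

lemma commute (hR : IsResolventAt A z R) (hS : IsResolventAt A w S) : Commute R S :=
  hR.commute_of_commute hS (Commute.refl R)

lemma smul_apply (hR : IsResolventAt A z R) (x : A.domain) :
    z • R x = x - R (A x) := by
  rw [eq_sub_iff_add_eq', ← map_smul, ← map_add, hR.left_inv]

lemma add_mul_mul_eq_add_mul_mul {z₀ w₀ : ℂ} {R₀ S₀ : E →L[ℂ] E}
    (hR₀ : IsResolventAt A z₀ R₀) (hR : IsResolventAt A z R)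
    (hS₀ : IsResolventAt B w₀ S₀) (hS : IsResolventAt B w S)
    (hcomm : Commute R₀ S₀) (hsum : z + w = z₀ + w₀) :
    (R₀ + S₀) * (R * S) = (R + S) * (R₀ * S₀) := by
  have hRS₀ : Commute S₀ R := hR₀.commute_of_commute hR hcomm.symm
  have hR₀S : Commute R₀ S := hS₀.commute_of_commute hS hcomm
  have hA : (R - R₀) * (S * S₀) = (z₀ - z) • (R * R₀ * (S * S₀)) := by
    rw [hR₀.sub_eq_smul_mul hR, smul_mul_assoc]
  have hB : R * R₀ * (S - S₀) = (z - z₀) • (R * R₀ * (S * S₀)) := by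
    have hzw : w₀ - w = z - z₀ := by linear_combination -hsum
    rw [hS₀.sub_eq_smul_mul hS, mul_smul_comm, hzw]
  have hcancel : (R - R₀) * (S * S₀) + R * R₀ * (S - S₀) = 0 := by
    rw [hA, hB, ← add_smul, sub_add_sub_cancel, sub_self, zero_smul]
  have hexpand : (R₀ + S₀) * (R * S) - (R + S) * (R₀ * S₀) =
      (R - R₀) * (S * S₀) + R * R₀ * (S - S₀) := by
    rw [add_mul, add_mul, ← mul_assoc R₀ R, (hR₀.commute hR).eq, ← mul_assoc S₀ R, hRS₀.eq,
      mul_assoc R S₀, (hS₀.commute hS).eq, ← mul_assoc S R₀, ← hR₀S.eq]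
    noncomm_ring
  exact sub_eq_zero.1 (hexpand.trans hcancel)

end IsResolventAt

lemma differentiableOn_resolvent [CompleteSpace E] {s : Set ℂ} {R : ℂ → E →L[ℂ] E}
    (hR : ∀ z ∈ s, IsResolventAt A z (R z)) : DifferentiableOn ℂ R s := by
  intro z hz
  have hdiff : DifferentiableAt ℂ (fun w => R z * Ring.inverse (1 - (z - w) • R z)) z := by
    have hunit := (hR z hz).isUnit_one_sub (hR z hz)
    have haff : DifferentiableAt ℂ (fun w => 1 - (z - w) • R z) z := by fun_prop
    exact ((differentiableAt_inverse hunit).comp z haff).const_mul (R z)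
  exact hdiff.differentiableWithinAt.congr (fun w hw => (hR z hz).eq_mul_inverse (hR w hw))
    ((hR z hz).eq_mul_inverse (hR z hz))

end Resolvents

section Sectors

lemma abs_arg_exp_mul_I_le (φ : ℝ) : |arg (exp (φ * I))| ≤ |φ| := by
  rcases lt_or_ge |φ| Real.pi with hφ | hφ
  · have hφ' := abs_lt.1 hφ
    rw [arg_exp_mul_I, (toIocMod_eq_self _).2 ⟨hφ'.1, by linarith⟩]
  · exact (abs_arg_le_pi _).trans hφ

lemma zero_mem_sector {θ : ℝ} (hθ : 0 ≤ θ) : (0 : ℂ) ∈ Sector θ := by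
  simpa [Sector] using hθ

lemma ofReal_mul_exp_mem_sector {θ φ r : ℝ} (hr : 0 ≤ r) (hφ : |φ| ≤ θ) :
    (r * exp (φ * I) : ℂ) ∈ Sector θ := by
  rcases hr.eq_or_lt with rfl | hr
  · simpa using zero_mem_sector ((abs_nonneg φ).trans hφ)
  · rw [Sector, mem_ofPred_eq, arg_real_mul _ hr]
    exact (abs_arg_exp_mul_I_le φ).trans hφ

lemma exp_ofReal_add_pi_mul_I (φ : ℝ) : exp ((φ + Real.pi : ℝ) * I) = -exp (φ * I) := by
  rw [ofReal_add]
  exact exp_mul_I_antiperiodic φ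

lemma exp_ofReal_sub_pi_mul_I (φ : ℝ) : exp ((φ - Real.pi : ℝ) * I) = -exp (φ * I) := by
  rw [ofReal_sub]
  exact exp_mul_I_antiperiodic.sub_eq φ

lemma neg_ofReal_mul_exp_mem_sector {θ φ r : ℝ} (hr : 0 ≤ r) (hφ : |φ| ≤ Real.pi)
    (hθ : Real.pi - |φ| ≤ θ) : -(r * exp (φ * I) : ℂ) ∈ Sector θ := by
  rw [← mul_neg]
  rcases le_total 0 φ with h | h
  · rw [abs_of_nonneg h] at hφ hθ
    rw [← exp_ofReal_sub_pi_mul_I]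
    exact ofReal_mul_exp_mem_sector hr (abs_le.2 ⟨by linarith, by linarith⟩)
  · rw [abs_of_nonpos h] at hφ hθ
    rw [← exp_ofReal_add_pi_mul_I]
    exact ofReal_mul_exp_mem_sector hr (abs_le.2 ⟨by linarith, by linarith⟩)

lemma sector_mem_nhds {θ : ℝ} {z : ℂ} (hz : z ≠ 0) (h : |z.arg| < θ) : Sector θ ∈ 𝓝 z := by
  have hcont : ContinuousAt (fun w : ℂ => InnerProductGeometry.angle w 1) z :=
    (InnerProductGeometry.continuousAt_angle (x := (z, 1)) hz one_ne_zero).comp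
      (f := fun w : ℂ => (w, (1 : ℂ))) (by fun_prop)
  rw [← angle_one_right hz] at h
  filter_upwards [hcont.eventually_lt_const h, isOpen_ne.mem_nhds hz] with w hw hw0
  rw [angle_one_right hw0] at hw
  exact hw.le

end Sectors

section ContourIntegrals

variable {F : Type*} [NormedAddCommGroup F] [NormedSpace ℂ F]

/-- Integral over the segment from `0` to `R e^{iφ}`: the ray integral cut off at radius `R`. -/
def segmentIntegral (φ R : ℝ) (f : ℂ → F) : F :=
  ∫ r in (0 : ℝ)..R, exp (φ * I) • f (r * exp (φ * I))

lemma continuousOn_ray {φ : ℝ} {s : Set ℂ} {f : ℂ → F} (hf : ContinuousOn f s)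
    (hs : ∀ r : ℝ, 0 ≤ r → (r * exp (φ * I) : ℂ) ∈ s) :
    ContinuousOn (fun r : ℝ => exp (φ * I) • f (r * exp (φ * I))) (Ici 0) :=
  (hf.comp (by fun_prop) hs).const_smul _

lemma intervalIntegrable_ray {φ R : ℝ} {s : Set ℂ} {f : ℂ → F} (hf : ContinuousOn f s)
    (hs : ∀ r : ℝ, 0 ≤ r → (r * exp (φ * I) : ℂ) ∈ s) (hR : 0 ≤ R) :
    IntervalIntegrable (fun r : ℝ => exp (φ * I) • f (r * exp (φ * I))) volume 0 R :=
  ContinuousOn.intervalIntegrable <|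
    (continuousOn_ray hf hs).mono ((uIcc_of_le hR).trans_subset Icc_subset_Ici_self)

lemma integrableOn_ray {φ C : ℝ} {s : Set ℂ} {f : ℂ → F} (hf : ContinuousOn f s)
    (hs : ∀ r : ℝ, 0 ≤ r → (r * exp (φ * I) : ℂ) ∈ s)
    (hC : ∀ z ∈ s, (1 + ‖z‖) ^ 2 * ‖f z‖ ≤ C) :
    IntegrableOn (fun r : ℝ => exp (φ * I) • f (r * exp (φ * I))) (Ioi 0) := by
  have hmeas := ((continuousOn_ray hf hs).mono Ioi_subset_Ici_self).aestronglyMeasurable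
    (μ := volume) measurableSet_Ioi
  refine (integrable_inv_one_add_sq.const_mul C).integrableOn.mono' hmeas ?_
  refine ae_restrict_of_forall_mem measurableSet_Ioi fun r (hr : 0 < r) => ?_
  have hbound := hC _ (hs r hr.le)
  rw [norm_mul, norm_real, norm_exp_ofReal_mul_I, mul_one, Real.norm_of_nonneg hr.le] at hbound
  rw [norm_smul, norm_exp_ofReal_mul_I, one_mul, ← div_eq_mul_inv, le_div_iff₀ (by positivity),
    mul_comm]
  refine le_trans ?_ hbound
  gcongr
  nlinarith

lemma tendsto_segmentIntegral_rayIntegral {φ : ℝ} {f : ℂ → F}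
    (hf : IntegrableOn (fun r : ℝ => exp (φ * I) • f (r * exp (φ * I))) (Ioi 0)) :
    Tendsto (fun R => segmentIntegral φ R f) atTop (𝓝 (rayIntegral φ 0 f)) :=
  intervalIntegral_tendsto_integral_Ioi 0 hf tendsto_id

lemma segmentIntegral_comp_neg_of_exp_eq_neg {φ ψ : ℝ} (h : exp (ψ * I) = -exp (φ * I))
    (R : ℝ) (f : ℂ → F) :
    segmentIntegral φ R (fun z => f (-z)) = -segmentIntegral ψ R f := by
  rw [segmentIntegral, segmentIntegral, ← intervalIntegral.integral_neg]
  simp only [h, mul_neg, neg_smul, neg_neg]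

lemma segmentIntegral_sub_segmentIntegral_comp_neg (φ R : ℝ) (f : ℂ → F) :
    segmentIntegral φ R (fun z => f (-z)) - segmentIntegral (-φ) R (fun z => f (-z)) =
      segmentIntegral (Real.pi - φ) R f - segmentIntegral (-(Real.pi - φ)) R f := by
  rw [segmentIntegral_comp_neg_of_exp_eq_neg (ψ := -(Real.pi - φ)) ?_,
    segmentIntegral_comp_neg_of_exp_eq_neg (φ := -φ) (ψ := Real.pi - φ) ?_, neg_sub_neg]
  · rw [← exp_ofReal_add_pi_mul_I, neg_add_eq_sub]
  · rw [← exp_ofReal_sub_pi_mul_I, neg_sub]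

lemma hasFDerivAt_exp_snd_mul_I (p : ℝ × ℝ) :
    HasFDerivAt (fun p : ℝ × ℝ => exp (p.2 * I))
      ((ContinuousLinearMap.snd ℝ ℝ ℝ).smulRight (I * exp (p.2 * I))) p := by
  have hexp : HasDerivAt (fun φ : ℝ => exp (φ * I)) (I * exp (p.2 * I)) p.2 := by
    simpa [mul_comm] using ((hasDerivAt_id p.2).ofReal_comp.mul_const I).cexp
  exact hexp.hasFDerivAt.comp p hasFDerivAt_snd

lemma hasFDerivAt_fst_mul_exp_snd_mul_I (p : ℝ × ℝ) :
    HasFDerivAt (fun p : ℝ × ℝ => (p.1 * exp (p.2 * I) : ℂ))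
      ((ContinuousLinearMap.fst ℝ ℝ ℝ).smulRight (exp (p.2 * I)) +
        (ContinuousLinearMap.snd ℝ ℝ ℝ).smulRight (I * p.1 * exp (p.2 * I))) p := by
  have hfst : HasFDerivAt (fun p : ℝ × ℝ => (p.1 : ℂ))
      ((ContinuousLinearMap.fst ℝ ℝ ℝ).smulRight (1 : ℂ)) p :=
    (hasDerivAt_id p.1).ofReal_comp.hasFDerivAt.comp p hasFDerivAt_fst
  refine (hfst.mul (hasFDerivAt_exp_snd_mul_I p)).congr_fderiv ?_
  ext <;> simp [mul_assoc, mul_left_comm]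

-- In polar coordinates `f(z) dz = e^{iφ} f dr + i r e^{iφ} f dφ` is a closed form, continuous on
-- the whole closed rectangle `[0, R] × [φ₁, φ₂]`, so the vertex of the sector need not be excised.
lemma segmentIntegral_sub_segmentIntegral_eq_arcIntegral [CompleteSpace F] {f : ℂ → F}
    {R φ₁ φ₂ : ℝ}
    (hc : ContinuousOn (fun p : ℝ × ℝ => f (p.1 * exp (p.2 * I))) ([[0, R]] ×ˢ [[φ₁, φ₂]]))
    (hd : ∀ r ∈ Ioo (min 0 R) (max 0 R), ∀ φ ∈ Ioo (min φ₁ φ₂) (max φ₁ φ₂),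
      DifferentiableAt ℂ f (r * exp (φ * I))) :
    segmentIntegral φ₂ R f - segmentIntegral φ₁ R f = arcIntegral R φ₁ φ₂ f := by
  let polar : ℝ × ℝ → ℂ := fun p => p.1 * exp (p.2 * I)
  let polar' : ℝ × ℝ → ℝ × ℝ →L[ℝ] ℂ := fun p =>
    (ContinuousLinearMap.fst ℝ ℝ ℝ).smulRight (exp (p.2 * I)) +
      (ContinuousLinearMap.snd ℝ ℝ ℝ).smulRight (I * p.1 * exp (p.2 * I))
  let exp' : ℝ × ℝ → ℝ × ℝ →L[ℝ] ℂ := fun p =>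
    (ContinuousLinearMap.snd ℝ ℝ ℝ).smulRight (I * exp (p.2 * I))
  let f' : ℝ × ℝ → ℝ × ℝ →L[ℝ] F := fun p =>
    (ContinuousLinearMap.toSpanSingleton ℂ (deriv f (polar p))).restrictScalars ℝ ∘L polar' p
  let P' : ℝ × ℝ → ℝ × ℝ →L[ℝ] F := fun p =>
    (I * polar p) • f' p + (I • polar' p).smulRight (f (polar p))
  let Q' : ℝ × ℝ → ℝ × ℝ →L[ℝ] F := fun p =>
    -(exp (p.2 * I) • f' p + (exp' p).smulRight (f (polar p)))
  have hdiv : ∀ p, P' p (1, 0) + Q' p (0, 1) = 0 := by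
    intro p
    simp only [P', Q', f', exp', polar', polar, add_apply, neg_apply, smul_apply,
      ContinuousLinearMap.comp_apply, ContinuousLinearMap.smulRight_apply,
      ContinuousLinearMap.coe_fst', ContinuousLinearMap.coe_snd',
      ContinuousLinearMap.coe_restrictScalars', ContinuousLinearMap.toSpanSingleton_apply,
      one_smul, zero_smul, add_zero, zero_add, smul_eq_mul]
    module
  have hf' : ∀ p ∈ Ioo (min 0 R) (max 0 R) ×ˢ Ioo (min φ₁ φ₂) (max φ₁ φ₂) \ ∅,
      HasFDerivAt (fun p => f (polar p)) (f' p) p := fun p hp =>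
    ((hd p.1 hp.1.1 p.2 hp.1.2).hasDerivAt.hasFDerivAt.restrictScalars ℝ).comp p
      (hasFDerivAt_fst_mul_exp_snd_mul_I p)
  have key := integral2_divergence_prod_of_hasFDerivAt_off_countable
    (fun p => (I * polar p) • f (polar p)) (fun p => -(exp (p.2 * I) • f (polar p))) P' Q'
    0 φ₁ R φ₂ ∅ countable_empty
    (ContinuousOn.smul (by fun_prop) hc) (ContinuousOn.smul (by fun_prop) hc).neg
    (fun p hp => ((hasFDerivAt_fst_mul_exp_snd_mul_I p).const_mul I).smul (hf' p hp))
    (fun p hp => ((hasFDerivAt_exp_snd_mul_I p).smul (hf' p hp)).neg)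
    (by simp [hdiv])
  simp only [hdiv, polar, intervalIntegral.integral_zero, intervalIntegral.integral_neg,
    ofReal_zero, zero_mul, mul_zero, zero_smul, sub_zero] at key
  simp only [segmentIntegral, arcIntegral, mul_assoc]
  linear_combination (norm := module) key

lemma tendsto_arcIntegral_atTop [CompleteSpace F] {θ φ₁ φ₂ : ℝ} {f : ℂ → F} {ℓ : F}
    (h₁ : |φ₁| ≤ θ) (h₂ : |φ₂| ≤ θ) (hf : ContinuousOn f (Sector θ))
    (hlim : Tendsto (fun z => z • f z) (Bornology.cobounded ℂ ⊓ 𝓟 (Sector θ)) (𝓝 ℓ)) :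
    Tendsto (fun R => arcIntegral R φ₁ φ₂ f) atTop (𝓝 (((φ₂ - φ₁) * I : ℂ) • ℓ)) := by
  have hsector : ∀ R : ℝ, 0 ≤ R → ∀ φ ∈ [[φ₁, φ₂]], (R * exp (φ * I) : ℂ) ∈ Sector θ :=
    fun R hR φ hφ => ofReal_mul_exp_mem_sector hR
      (abs_le.2 (uIcc_subset_Icc (abs_le.1 h₁) (abs_le.1 h₂) hφ))
  have hpolar : Tendsto (fun p : ℝ × ℝ => (p.1 * exp (p.2 * I) : ℂ)) (atTop ×ˢ 𝓟 [[φ₁, φ₂]])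
      (Bornology.cobounded ℂ ⊓ 𝓟 (Sector θ)) := by
    refine tendsto_inf.2 ⟨?_, tendsto_principal.2 (eventually_prod_principal_iff.2 ?_)⟩
    · rw [← tendsto_norm_atTop_iff_cobounded]
      simpa [norm_exp_ofReal_mul_I, Function.comp_def] using
        tendsto_abs_atTop_atTop.comp tendsto_fst
    · filter_upwards [eventually_ge_atTop 0] with R hR using hsector R hR
  have hunif : TendstoUniformlyOn
      (fun (R : ℝ) (φ : ℝ) => (I * R * exp (φ * I)) • f (R * exp (φ * I)))
      (fun _ => I • ℓ) atTop [[φ₁, φ₂]] := by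
    rw [← tendsto_prod_principal_iff]
    refine ((hlim.comp hpolar).const_smul I).congr fun p => ?_
    simp only [Function.comp_apply, Function.HasUncurry.uncurry, smul_smul, mul_assoc, id]
  have hconst : ∫ _ in φ₁..φ₂, I • ℓ = ((φ₂ - φ₁) * I : ℂ) • ℓ := by
    rw [intervalIntegral.integral_const, mul_smul, ← ofReal_sub, coe_smul]
  rw [← hconst]
  refine hunif.tendsto_intervalIntegral_of_continuousOn ?_
  filter_upwards [eventually_ge_atTop 0] with R hR
  exact ContinuousOn.smul (by fun_prop) (hf.comp (by fun_prop) (hsector R hR))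

lemma tendsto_segmentIntegral_sub_segmentIntegral [CompleteSpace F] {θ φ₁ φ₂ : ℝ} {f : ℂ → F}
    {ℓ : F} (h₁ : |φ₁| ≤ θ) (h₂ : |φ₂| ≤ θ) (hf : DifferentiableOn ℂ f (Sector θ))
    (hlim : Tendsto (fun z => z • f z) (Bornology.cobounded ℂ ⊓ 𝓟 (Sector θ)) (𝓝 ℓ)) :
    Tendsto (fun R => segmentIntegral φ₂ R f - segmentIntegral φ₁ R f) atTop
      (𝓝 (((φ₂ - φ₁) * I : ℂ) • ℓ)) := by
  refine (tendsto_arcIntegral_atTop h₁ h₂ hf.continuousOn hlim).congr' ?_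
  filter_upwards [eventually_ge_atTop 0] with R hR
  refine (segmentIntegral_sub_segmentIntegral_eq_arcIntegral ?_ fun r hr φ hφ => ?_).symm
  · refine hf.continuousOn.comp (by fun_prop) fun p hp => ?_
    rw [uIcc_of_le hR] at hp
    exact ofReal_mul_exp_mem_sector hp.1.1
      (abs_le.2 (uIcc_subset_Icc (abs_le.1 h₁) (abs_le.1 h₂) hp.2))
  · rw [min_eq_left hR] at hr
    have hz : (r * exp (φ * I) : ℂ) ≠ 0 := mul_ne_zero (ofReal_ne_zero.2 hr.1.ne') (exp_ne_zero _)
    have hφθ : |φ| < θ := by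
      rw [abs_lt]
      exact ⟨(le_min (abs_le.1 h₁).1 (abs_le.1 h₂).1).trans_lt hφ.1,
        hφ.2.trans_le (max_le (abs_le.1 h₁).2 (abs_le.1 h₂).2)⟩
    refine hf.differentiableAt (sector_mem_nhds hz ?_)
    rw [arg_real_mul _ hr.1]
    exact (abs_arg_exp_mul_I_le φ).trans_lt hφθ

end ContourIntegrals

section Sectorial

variable {A B : E →ₗ.[ℂ] E} {θ θA θB K KA KB : ℝ} {R RA RB : ℂ → E →L[ℂ] E}

namespace IsSectorial

lemma tendsto_resolvent_zero (hA : IsSectorial A θ R K) :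
    Tendsto R (Bornology.cobounded ℂ ⊓ 𝓟 (Sector θ)) (𝓝 0) := by
  have hbound : ∀ᶠ z in Bornology.cobounded ℂ ⊓ 𝓟 (Sector θ), ‖R z‖ ≤ K / (1 + ‖z‖) := by
    filter_upwards [mem_inf_of_right (mem_principal_self _)] with z hz
    rw [le_div_iff₀' (by positivity)]
    exact hA.bound z hz
  have hdiv : Tendsto (fun z : ℂ => K / (1 + ‖z‖)) (Bornology.cobounded ℂ) (𝓝 0) :=
    (tendsto_atTop_add_const_left _ 1 tendsto_norm_cobounded_atTop).const_div_atTop K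
  exact squeeze_zero_norm' hbound (hdiv.mono_left inf_le_left)

lemma tendsto_smul_resolvent_apply (hA : IsSectorial A θ R K) (x : A.domain) :
    Tendsto (fun z => z • R z x) (Bornology.cobounded ℂ ⊓ 𝓟 (Sector θ)) (𝓝 (x : E)) := by
  have hRAx : Tendsto (fun z => (x : E) - R z (A x)) (Bornology.cobounded ℂ ⊓ 𝓟 (Sector θ))
      (𝓝 (x : E)) := by
    have heval :=
      ((ContinuousLinearMap.apply ℂ E (A x)).continuous.tendsto 0).comp hA.tendsto_resolvent_zero
    simpa using heval.const_sub (x : E)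
  refine hRAx.congr' ?_
  filter_upwards [mem_inf_of_right (mem_principal_self _)] with z hz
  exact ((hA.res z hz).smul_apply x).symm

lemma differentiableOn [CompleteSpace E] (hA : IsSectorial A θ R K) :
    DifferentiableOn ℂ R (Sector θ) :=
  differentiableOn_resolvent hA.res

lemma tendsto_segmentIntegral_sub_segmentIntegral_neg [CompleteSpace E]
    (hA : IsSectorial A θ R K) {φ : ℝ} (hφ : |φ| ≤ θ) (x : A.domain) :
    Tendsto (fun ρ => segmentIntegral φ ρ (fun z => R z x) -
        segmentIntegral (-φ) ρ (fun z => R z x))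
      atTop (𝓝 ((2 * φ * I : ℂ) • (x : E))) := by
  have hlim := tendsto_segmentIntegral_sub_segmentIntegral ((abs_neg φ).trans_le hφ) hφ
    (hA.differentiableOn.clm_apply (differentiableOn_const (x : E)))
    (hA.tendsto_smul_resolvent_apply x)
  rwa [ofReal_neg, sub_neg_eq_add, ← two_mul] at hlim

lemma tendsto_segmentIntegral_sub_segmentIntegral_neg_comp_neg [CompleteSpace E]
    (hA : IsSectorial A θ R K) {φ : ℝ} (hφ : |Real.pi - φ| ≤ θ) (x : A.domain) :
    Tendsto (fun ρ => segmentIntegral φ ρ (fun z => R (-z) x) -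
        segmentIntegral (-φ) ρ (fun z => R (-z) x))
      atTop (𝓝 ((2 * (Real.pi - φ) * I : ℂ) • (x : E))) := by
  rw [← ofReal_sub]
  refine (hA.tendsto_segmentIntegral_sub_segmentIntegral_neg hφ x).congr fun ρ => ?_
  exact (segmentIntegral_sub_segmentIntegral_comp_neg φ ρ fun z => R z x).symm

end IsSectorial

lemma ResolventCommuting.commute (hcomm : ResolventCommuting RA RB θA θB)
    (hA : IsSectorial A θA RA KA) (hB : IsSectorial B θB RB KB)
    {z w : ℂ} (hz : z ∈ Sector θA) (hw : w ∈ Sector θB) : Commute (RA z) (RB w) := by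
  obtain ⟨lam, hlam, mu, hmu, h⟩ := hcomm
  have hlam_w : Commute (RA lam) (RB w) := (hB.res mu hmu).commute_of_commute (hB.res w hw) h
  exact ((hA.res lam hlam).commute_of_commute (hA.res z hz) hlam_w.symm).symm

lemma continuousOn_resolvent_neg_apply [CompleteSpace E] (hA : IsSectorial A θ R K) (x : E) :
    ContinuousOn (fun z => R (-z) x) {z | -z ∈ Sector θ} :=
  (hA.differentiableOn.continuousOn.comp continuousOn_neg fun _ hz => hz).clm_apply
    continuousOn_const

lemma continuousOn_resolvent_neg_apply_resolvent [CompleteSpace E] (hA : IsSectorial A θA RA KA)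
    (hB : IsSectorial B θB RB KB) (w : E) :
    ContinuousOn (fun z => RA (-z) (RB z w)) (Sector θB ∩ {z | -z ∈ Sector θA}) :=
  (hA.differentiableOn.continuousOn.comp continuousOn_neg fun _ hz => hz.2).clm_apply
    ((hB.differentiableOn.continuousOn.mono inter_subset_left).clm_apply continuousOn_const)

lemma sq_mul_norm_resolvent_neg_apply_resolvent_le (hA : IsSectorial A θA RA KA)
    (hB : IsSectorial B θB RB KB) (w : E) {z : ℂ}
    (hz : z ∈ Sector θB ∩ {z | -z ∈ Sector θA}) :
    (1 + ‖z‖) ^ 2 * ‖RA (-z) (RB z w)‖ ≤ KA * (KB * ‖w‖) := by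
  have hKA : (1 + ‖z‖) * ‖RA (-z)‖ ≤ KA := norm_neg z ▸ hA.bound (-z) hz.2
  have hKB := hB.bound z hz.1
  have hKA0 : 0 ≤ KA := zero_le_one.trans hA.one_le
  calc (1 + ‖z‖) ^ 2 * ‖RA (-z) (RB z w)‖
      ≤ (1 + ‖z‖) ^ 2 * (‖RA (-z)‖ * (‖RB z‖ * ‖w‖)) := by
        gcongr
        exact (RA (-z)).le_opNorm_of_le ((RB z).le_opNorm w)
    _ = ((1 + ‖z‖) * ‖RA (-z)‖) * (((1 + ‖z‖) * ‖RB z‖) * ‖w‖) := by ring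
    _ ≤ KA * (KB * ‖w‖) := by gcongr

lemma resolvent_zero_add_apply_segmentIntegral [CompleteSpace E] (hA : IsSectorial A θA RA KA)
    (hB : IsSectorial B θB RB KB) (hcomm : ResolventCommuting RA RB θA θB) {φ ρ : ℝ} (hρ : 0 ≤ ρ)
    (hray : ∀ r : ℝ, 0 ≤ r → (r * exp (φ * I) : ℂ) ∈ Sector θB ∩ {z | -z ∈ Sector θA}) (w : E) :
    (RA 0 + RB 0) (segmentIntegral φ ρ fun z => RA (-z) (RB z w)) =
      segmentIntegral φ ρ (fun z => RA (-z) (RA 0 (RB 0 w))) +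
        segmentIntegral φ ρ (fun z => RB z (RA 0 (RB 0 w))) := by
  obtain ⟨hB0, hA0⟩ : (0 : ℂ) ∈ Sector θB ∩ {z | -z ∈ Sector θA} := by simpa using hray 0 le_rfl
  rw [mem_ofPred_eq, neg_zero] at hA0
  rw [segmentIntegral, segmentIntegral, segmentIntegral,
    ← ContinuousLinearMap.intervalIntegral_comp_comm _
      (intervalIntegrable_ray (continuousOn_resolvent_neg_apply_resolvent hA hB w) hray hρ),
    ← intervalIntegral.integral_add
      (intervalIntegrable_ray (continuousOn_resolvent_neg_apply hA _)
        (fun r hr => (hray r hr).2) hρ)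
      (intervalIntegrable_ray (hB.differentiableOn.continuousOn.clm_apply continuousOn_const)
        (fun r hr => (hray r hr).1) hρ)]
  refine intervalIntegral.integral_congr fun r hr => ?_
  rw [uIcc_of_le hρ] at hr
  obtain ⟨hzB, hzA⟩ := hray r hr.1
  have hmul := (hA.res 0 hA0).add_mul_mul_eq_add_mul_mul (hA.res _ hzA) (hB.res 0 hB0)
    (hB.res _ hzB) (hcomm.commute hA hB hA0 hB0) (by rw [neg_add_cancel, add_zero])
  rw [map_smul, ← smul_add]
  exact congrArg _ (DFunLike.congr_fun hmul w)

lemma ofReal_mul_exp_mem_sector_inter_neg {φ r : ℝ} (hφπ : |φ| ≤ Real.pi) (hφB : |φ| ≤ θB)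
    (hφA : Real.pi - |φ| ≤ θA) (hr : 0 ≤ r) :
    (r * exp (φ * I) : ℂ) ∈ Sector θB ∩ {z | -z ∈ Sector θA} :=
  ⟨ofReal_mul_exp_mem_sector hr hφB, neg_ofReal_mul_exp_mem_sector hr hφπ hφA⟩

lemma resolvent_zero_add_apply_gammaIntegral [CompleteSpace E] (hA : IsSectorial A θA RA KA)
    (hB : IsSectorial B θB RB KB) (hcomm : ResolventCommuting RA RB θA θB) (hθB : 0 ≤ θB)
    (hθBπ : θB ≤ Real.pi) (hsum : Real.pi ≤ θA + θB) (w : E) :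
    (RA 0 + RB 0) (gammaIntegral θB fun z => RA (-z) (RB z w)) =
      (2 * Real.pi * I : ℂ) • RA 0 (RB 0 w) := by
  have hray : ∀ φ : ℝ, |φ| = θB → ∀ r : ℝ, 0 ≤ r →
      (r * exp (φ * I) : ℂ) ∈ Sector θB ∩ {z | -z ∈ Sector θA} := fun φ hφ _ =>
    ofReal_mul_exp_mem_sector_inter_neg (hφ.trans_le hθBπ) hφ.le (by linarith)
  have hpos := abs_of_nonneg hθB
  have hneg := (abs_neg θB).trans hpos
  have hA0 := zero_mem_sector (θ := θA) (by linarith)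
  have hB0 := zero_mem_sector hθB
  have hlimK (φ : ℝ) (hφ : |φ| = θB) := tendsto_segmentIntegral_rayIntegral <|
    integrableOn_ray (continuousOn_resolvent_neg_apply_resolvent hA hB w) (hray φ hφ)
      fun _ => sq_mul_norm_resolvent_neg_apply_resolvent_le hA hB w
  have hdomB : RA 0 (RB 0 w) ∈ B.domain := by
    rw [← mul_apply_eq_comp, (hcomm.commute hA hB hA0 hB0).eq]
    exact (hB.res 0 hB0).mem _
  have hlimA := hA.tendsto_segmentIntegral_sub_segmentIntegral_neg_comp_neg (φ := θB)
    (abs_le.2 ⟨by linarith, by linarith⟩) ⟨_, (hA.res 0 hA0).mem (RB 0 w)⟩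
  have hlimB := hB.tendsto_segmentIntegral_sub_segmentIntegral_neg hpos.le ⟨_, hdomB⟩
  have hangle : (2 * Real.pi * I : ℂ) • RA 0 (RB 0 w) =
      (2 * (Real.pi - θB) * I : ℂ) • RA 0 (RB 0 w) + (2 * θB * I : ℂ) • RA 0 (RB 0 w) := by
    module
  rw [hangle]
  refine tendsto_nhds_unique (((RA 0 + RB 0).continuous.tendsto _).comp
    ((hlimK θB hpos).sub (hlimK (-θB) hneg))) ((hlimA.add hlimB).congr' ?_)
  filter_upwards [eventually_ge_atTop 0] with ρ hρ
  rw [Function.comp_apply, map_sub,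
    resolvent_zero_add_apply_segmentIntegral hA hB hcomm hρ (hray θB hpos),
    resolvent_zero_add_apply_segmentIntegral hA hB hcomm hρ (hray (-θB) hneg),
    sub_add_sub_comm]

end Sectorial

theorem inv_inv_eq_add_inv_Kop_general [CompleteSpace E] {θA θB KA KB : ℝ} {A B : E →ₗ.[ℂ] E}
    {RA RB : ℂ → E →L[ℂ] E} (hθB : 0 ≤ θB) (hθBπ : θB ≤ Real.pi) (hsum : Real.pi ≤ θA + θB)
    (hA : IsSectorial A θA RA KA) (hB : IsSectorial B θB RB KB)
    (hcomm : ResolventCommuting RA RB θA θB) (w : E) :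
    RA 0 (RB 0 w) = RA 0 (Kop RA RB θB w) + RB 0 (Kop RA RB θB w) := by
  rw [Kop, ← _root_.add_apply, map_smul,
    resolvent_zero_add_apply_gammaIntegral hA hB hcomm hθB hθBπ hsum,
    inv_smul_smul₀ two_pi_I_ne_zero]

/-- For every `w ∈ E`, `A⁻¹B⁻¹ w = (A⁻¹ + B⁻¹) 𝒦 w`, where `A⁻¹ = RA 0`, `B⁻¹ = RB 0`
(note `0 ∈ S_θ ⊆ ρ(-A), ρ(-B)`). -/
theorem inv_inv_eq_add_inv_Kop
    [CompleteSpace E]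
    (θA θB KA KB : ℝ) (hθA : θA < Real.pi) (hBA : θB < θA) (hsum : Real.pi < θA + θB)
    (A B : E →ₗ.[ℂ] E) (RA RB : ℂ → E →L[ℂ] E)
    (hA : IsSectorial A θA RA KA) (hB : IsSectorial B θB RB KB)
    (hcomm : ResolventCommuting RA RB θA θB)
    (w : E) :
    RA 0 (RB 0 w) = RA 0 (Kop RA RB θB w) + RB 0 (Kop RA RB θB w) := by
  exact inv_inv_eq_add_inv_Kop_general (by linarith) (by linarith) hsum.le hA hB hcomm w

end
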